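/- Let S = (T, δ) be a ShEx schema. For each T ∈ T and each triple constraint p :: T'^μ ∈ δ(T) with μ ∈ {1, +}, fix a value b^{T,p} ∈ Dom such that the values b^{T,p} are pairwise distinct, and b^{T,p} ∈ NullLit if T' = Lit while b^{T,p} ∈ Blank if T' ∈ T. Define J_1 = { T'(b^{T,p}) | T ∈ T, p :: T'^μ ∈ δ(T), μ ∈ {1, +} } and J_2 = { Triple(b^{T,p}, q, b^{T_1,q}) | T_1(b^{T,p}) ∈ J_1 with T_1 ∈ T, and q :: T_2^μ ∈ δ(T_1) with μ ∈ {1, +} }. Then the instance J_1 ∪ J_2 of G_T satisfies every sentence of Σ_S. -/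

import Mathlib

namespace RdfDE

/-- The RDF domain: a countably infinite domain partitioned into IRIs, literals and
blank nodes, with a distinguished infinite subset of null literals. -/
structure RDFDom (Dom : Type) where
  Iri : Set Dom
  Lit : Set Dom
  Blank : Set Dom
  NullLit : Set Dom
  cover : Iri ∪ Lit ∪ Blank = Set.univ
  disjIL : Disjoint Iri Lit
  disjIB : Disjoint Iri Blank
  disjLB : Disjoint Lit Blank
  nullSub : NullLit ⊆ Lit
  infIri : Iri.Infinite
  infLit : Lit.Infinite
  infBlank : Blank.Infinite
  infNull : NullLit.Infinite

/-- Multiplicities 1, ?, *, +. -/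
inductive Mult : Type
  | one | opt | star | plus

/-- A triple constraint `p :: T'^μ`; `target = none` stands for `Lit`. -/
structure TC (Dom Shape : Type) where
  prop : Dom
  target : Option Shape
  mult : Mult

/-- A ShEx schema over the (finite) type `Shape` of shape names. -/
structure ShEx (Dom Shape : Type) (D : RDFDom Dom) where
  δ : Shape → Set (TC Dom Shape)
  finite : ∀ T, (δ T).Finite
  propIri : ∀ T : Shape, ∀ tc ∈ δ T, tc.prop ∈ D.Iri
  uniqueProp : ∀ T : Shape, ∀ tc1 ∈ δ T, ∀ tc2 ∈ δ T, tc1.prop = tc2.prop → tc1 = tc2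

/-- Facts of the target signature `G_T`: a ternary `Triple`, unary `Lit`,
and a unary relation for each shape name. -/
inductive Fact (Dom Shape : Type) : Type
  | triple (s p o : Dom)
  | lit (n : Dom)
  | shape (T : Shape) (n : Dom)

/-- The unary fact `T(n)` where `T ∈ 𝒯 ∪ {Lit}`. -/
def factOf {Dom Shape : Type} (t : Option Shape) (n : Dom) : Fact Dom Shape :=
  match t with
  | none => .lit n
  | some T => .shape T n

/-- Cardinality constraint imposed by a multiplicity on the set of objects. -/
def multOk {Dom : Type} (μ : Mult) (K : Set Dom) : Prop :=
  match μ with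
  | .one => ∃! y, y ∈ K
  | .opt => K.Subsingleton
  | .star => True
  | .plus => K.Nonempty

/-- `J` satisfies every sentence of `Σ_S`: the sort sentences, and for each
triple constraint the sentences `tc`, `mult≥1` (if μ ∈ {1,+}) and `mult≤1` (if μ ∈ {1,?}). -/
def satSigma {Dom Shape : Type} (D : RDFDom Dom) (S : ShEx Dom Shape D)
    (J : Set (Fact Dom Shape)) : Prop :=
  (∀ (T : Shape) (n : Dom), Fact.shape T n ∈ J → n ∈ D.Iri ∪ D.Blank) ∧
  (∀ n : Dom, Fact.lit n ∈ J → n ∈ D.Lit) ∧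
  (∀ T : Shape, ∀ tc ∈ S.δ T,
    (∀ x y : Dom, Fact.shape T x ∈ J → Fact.triple x tc.prop y ∈ J →
      factOf tc.target y ∈ J) ∧
    ((tc.mult = Mult.one ∨ tc.mult = Mult.plus) →
      ∀ x : Dom, Fact.shape T x ∈ J → ∃ y : Dom, Fact.triple x tc.prop y ∈ J) ∧
    ((tc.mult = Mult.one ∨ tc.mult = Mult.opt) →
      ∀ x y z : Dom, Fact.shape T x ∈ J → Fact.triple x tc.prop y ∈ J →
        Fact.triple x tc.prop z ∈ J → y = z))

/-- Nodes of a graph: values occurring in subject or object position. -/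
def nodes {Dom : Type} (G : Set (Dom × Dom × Dom)) : Set Dom :=
  {n | ∃ t ∈ G, t.1 = n ∨ t.2.2 = n}

/-- `G` is an RDF graph: triples lie in `(Iri ∪ Blank) × Iri × (Iri ∪ Blank ∪ Lit)`. -/
def isRDFGraph {Dom : Type} (D : RDFDom Dom) (G : Set (Dom × Dom × Dom)) : Prop :=
  ∀ t ∈ G, t.1 ∈ D.Iri ∪ D.Blank ∧ t.2.1 ∈ D.Iri ∧ t.2.2 ∈ D.Iri ∪ D.Blank ∪ D.Lit

/-- rdf-to-inst(G, typing). -/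
def rdfToInst {Dom Shape : Type} (G : Set (Dom × Dom × Dom))
    (typing : Dom → Set (Option Shape)) : Set (Fact Dom Shape) :=
  {F | (∃ t ∈ G, F = Fact.triple t.1 t.2.1 t.2.2) ∨
       (∃ n ∈ nodes G, ∃ T ∈ typing n, F = factOf T n)}

/-- The graph component of inst-to-rdf(I). -/
def instGraph {Dom Shape : Type} (I : Set (Fact Dom Shape)) : Set (Dom × Dom × Dom) :=
  {t | Fact.triple t.1 t.2.1 t.2.2 ∈ I}

/-- The typing component of inst-to-rdf(I) (empty off the nodes of the graph). -/
def instTyping {Dom Shape : Type} (I : Set (Fact Dom Shape)) : Dom → Set (Option Shape) :=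
  fun n => {T | n ∈ nodes (instGraph I) ∧ factOf T n ∈ I}

/-- `(G, typing)` is correctly typed w.r.t. the schema `S`. -/
def correctlyTyped {Dom Shape : Type} (D : RDFDom Dom) (S : ShEx Dom Shape D)
    (G : Set (Dom × Dom × Dom)) (typing : Dom → Set (Option Shape)) : Prop :=
  ∀ n ∈ nodes G,
    ((none : Option Shape) ∈ typing n → n ∈ D.Lit) ∧
    (∀ T : Shape, some T ∈ typing n →
      n ∈ D.Iri ∪ D.Blank ∧
      ∀ tc ∈ S.δ T,
        (∀ m : Dom, (n, tc.prop, m) ∈ G → tc.target ∈ typing m) ∧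
        multOk tc.mult {m : Dom | (n, tc.prop, m) ∈ G})

/-- A fact `R(t)` of a relational instance. -/
structure RelFact (Dom RSym : Type) (ar : RSym → ℕ) where
  sym : RSym
  args : Fin (ar sym) → Dom

/-- A functional dependency `R : X → Y`. -/
structure Fd (RSym : Type) (ar : RSym → ℕ) where
  sym : RSym
  X : Set (Fin (ar sym))
  Y : Set (Fin (ar sym))

/-- The fd `φ` holds in the relational instance `I`. -/
def fdHolds {Dom RSym : Type} {ar : RSym → ℕ} (I : Set (RelFact Dom RSym ar))
    (φ : Fd RSym ar) : Prop :=
  ∀ t1 t2 : Fin (ar φ.sym) → Dom,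
    (⟨φ.sym, t1⟩ : RelFact Dom RSym ar) ∈ I →
    (⟨φ.sym, t2⟩ : RelFact Dom RSym ar) ∈ I →
    (∀ i ∈ φ.X, t1 i = t2 i) → ∀ j ∈ φ.Y, t1 j = t2 j

/-- A valid instance of the relational schema: finite, over `Lit \ NullLit`,
satisfying all functional dependencies. -/
def validInst {Dom RSym : Type} {ar : RSym → ℕ} (D : RDFDom Dom)
    (fds : Set (Fd RSym ar)) (I : Set (RelFact Dom RSym ar)) : Prop :=
  I.Finite ∧ (∀ F ∈ I, ∀ i, F.args i ∈ D.Lit \ D.NullLit) ∧ ∀ φ ∈ fds, fdHolds I φ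

/-- A relational atom with variables in `V`. -/
structure Atom (RSym : Type) (ar : RSym → ℕ) (V : Type) where
  sym : RSym
  args : Fin (ar sym) → V

/-- The object term of an std: either a variable or a functional term `g(z)`. -/
inductive Obj (FSym : Type) (far : FSym → ℕ) (V : Type) : Type
  | var (v : V)
  | app (g : FSym) (z : Fin (far g) → V)

/-- A fully-typed source-to-target tgd
`∀x,y. φ(x,y) ⇒ Triple(f(x), p, o) ∧ T_s(f(x)) ∧ T_o(o)`, where `x` has length
`far f`, `y` has length `ny`, and the body uses exactly the variables `x ∪ y`. -/
structure Std (Dom RSym FSym : Type) (ar : RSym → ℕ) (far : FSym → ℕ) where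
  f : FSym
  ny : ℕ
  body : Set (Atom RSym ar (Fin (far f) ⊕ Fin ny))
  bodyFinite : body.Finite
  covers : ∀ v : Fin (far f) ⊕ Fin ny, ∃ a ∈ body, ∃ i, a.args i = v
  p : Dom
  obj : Obj FSym far (Fin (far f) ⊕ Fin ny)

/-- The variables `x ∪ y` of an std. -/
abbrev Std.Var {Dom RSym FSym : Type} {ar : RSym → ℕ} {far : FSym → ℕ}
    (σ : Std Dom RSym FSym ar far) : Type :=
  Fin (far σ.f) ⊕ Fin σ.ny

/-- `ν^{F_int}(o)`. -/
def Obj.eval {Dom FSym : Type} {far : FSym → ℕ} {V : Type}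
    (Fint : (f : FSym) → (Fin (far f) → Dom) → Dom) (ν : V → Dom) :
    Obj FSym far V → Dom
  | .var v => ν v
  | .app g z => Fint g (fun i => ν (z i))

/-- The type `T_o` of the object of an std: `Lit` (i.e. `none`) for a variable,
`type(g)` for a functional term `g(z)`. -/
def Std.objType {Dom RSym FSym Shape : Type} {ar : RSym → ℕ} {far : FSym → ℕ}
    (ftype : FSym → Shape) (σ : Std Dom RSym FSym ar far) : Option Shape :=
  match σ.obj with
  | .var _ => none
  | .app g _ => some (ftype g)

/-- The valuation `ν` maps every atom of the body of `σ` to a fact of `I`. -/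
def bodyHolds {Dom RSym FSym : Type} {ar : RSym → ℕ} {far : FSym → ℕ}
    (σ : Std Dom RSym FSym ar far) (ν : σ.Var → Dom)
    (I : Set (RelFact Dom RSym ar)) : Prop :=
  ∀ a ∈ σ.body, (⟨a.sym, fun i => ν (a.args i)⟩ : RelFact Dom RSym ar) ∈ I

/-- `I ∪ J ∪ F_int ⊨ σ`. -/
def stdSat {Dom RSym FSym Shape : Type} {ar : RSym → ℕ} {far : FSym → ℕ}
    (Fint : (f : FSym) → (Fin (far f) → Dom) → Dom) (ftype : FSym → Shape)
    (σ : Std Dom RSym FSym ar far) (I : Set (RelFact Dom RSym ar))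
    (J : Set (Fact Dom Shape)) : Prop :=
  ∀ ν : σ.Var → Dom, bodyHolds σ ν I →
    Fact.triple (Fint σ.f fun i => ν (Sum.inl i)) σ.p (Obj.eval Fint ν σ.obj) ∈ J ∧
    Fact.shape (ftype σ.f) (Fint σ.f fun i => ν (Sum.inl i)) ∈ J ∧
    factOf (σ.objType ftype) (Obj.eval Fint ν σ.obj) ∈ J

/-- The std conforms to the schema `S`: if `δ(T_s)` contains a triple constraint
on the property `p` of the std then its target is `T_o`. -/
def Std.conforms {Dom RSym FSym Shape : Type} {ar : RSym → ℕ} {far : FSym → ℕ}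
    (D : RDFDom Dom) (S : ShEx Dom Shape D) (ftype : FSym → Shape)
    (σ : Std Dom RSym FSym ar far) : Prop :=
  ∀ tc ∈ S.δ (ftype σ.f), tc.prop = σ.p → tc.target = σ.objType ftype

/-- A fully-typed data exchange setting `(R, S, Σ_st, F, F_int)`. -/
structure DES (Dom RSym FSym Shape : Type) (ar : RSym → ℕ) (far : FSym → ℕ) where
  D : RDFDom Dom
  shex : ShEx Dom Shape D
  fds : Set (Fd RSym ar)
  fdsFin : fds.Finite
  ftype : FSym → Shape
  Fint : (f : FSym) → (Fin (far f) → Dom) → Dom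
  FintIri : ∀ f args, Fint f args ∈ D.Iri
  FintInj : ∀ f, Function.Injective (Fint f)
  FintDisj : ∀ f g, f ≠ g → ∀ a b, Fint f a ≠ Fint g b
  stds : Set (Std Dom RSym FSym ar far)
  stdsFin : stds.Finite
  stP : ∀ σ ∈ stds, σ.p ∈ D.Iri
  stConf : ∀ σ ∈ stds, σ.conforms D shex ftype

variable {Dom RSym FSym Shape : Type} {ar : RSym → ℕ} {far : FSym → ℕ}

/-- `σ1, σ2` are a contentious pair of stds of the setting. -/
def contentious (des : DES Dom RSym FSym Shape ar far)
    (σ1 σ2 : Std Dom RSym FSym ar far) : Prop :=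
  σ1 ∈ des.stds ∧ σ2 ∈ des.stds ∧ σ1.f = σ2.f ∧ σ1.p = σ2.p ∧
  ∃ tc ∈ des.shex.δ (des.ftype σ1.f), tc.prop = σ1.p ∧
    tc.target = σ1.objType des.ftype ∧ (tc.mult = Mult.one ∨ tc.mult = Mult.opt)

/-- `σ1, σ2` are functionally overlapping. -/
def funOverlap (des : DES Dom RSym FSym Shape ar far)
    (σ1 σ2 : Std Dom RSym FSym ar far) : Prop :=
  ∀ I : Set (RelFact Dom RSym ar), validInst des.D des.fds I →
    ∀ (ν1 : σ1.Var → Dom) (ν2 : σ2.Var → Dom),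
      bodyHolds σ1 ν1 I → bodyHolds σ2 ν2 I →
      HEq (fun i : Fin (far σ1.f) => ν1 (Sum.inl i))
          (fun i : Fin (far σ2.f) => ν2 (Sum.inl i)) →
      Obj.eval des.Fint ν1 σ1.obj = Obj.eval des.Fint ν2 σ2.obj

/-- The setting is key-covered. -/
def keyCovered (des : DES Dom RSym FSym Shape ar far) : Prop :=
  ∀ σ1 σ2, contentious des σ1 σ2 → funOverlap des σ1 σ2

/-- `J` is a solution for the valid source instance `I`. -/
def isSolution (des : DES Dom RSym FSym Shape ar far)
    (I : Set (RelFact Dom RSym ar)) (J : Set (Fact Dom Shape)) : Prop :=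
  (∀ σ ∈ des.stds, stdSat des.Fint des.ftype σ I J) ∧ satSigma des.D des.shex J

/-- The setting is consistent: every valid source instance has a solution. -/
def consistent (des : DES Dom RSym FSym Shape ar far) : Prop :=
  ∀ I : Set (RelFact Dom RSym ar), validInst des.D des.fds I →
    ∃ J : Set (Fact Dom Shape), isSolution des I J

/-- The canonical target instance `J_0` of `I`. -/
def canonical (des : DES Dom RSym FSym Shape ar far)
    (I : Set (RelFact Dom RSym ar)) : Set (Fact Dom Shape) :=
  {F | ∃ σ ∈ des.stds, ∃ ν : σ.Var → Dom, bodyHolds σ ν I ∧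
    (F = Fact.triple (des.Fint σ.f fun i => ν (Sum.inl i)) σ.p (Obj.eval des.Fint ν σ.obj) ∨
     F = Fact.shape (des.ftype σ.f) (des.Fint σ.f fun i => ν (Sum.inl i)) ∨
     F = factOf (σ.objType des.ftype) (Obj.eval des.Fint ν σ.obj))}

/-- The vector `z` of variables of the object term of an std (of length 1 if the
object is a variable). -/
def Std.objVars (σ : Std Dom RSym FSym ar far) : Σ n : ℕ, Fin n → σ.Var :=
  match σ.obj with
  | .var v => ⟨1, fun _ => v⟩
  | .app g z => ⟨far g, z⟩

/-- The view `V_σ(I)` as a set of pairs of tuples (encoded as lists):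
the values of `x` and the values of `z`. -/
def viewRel (σ : Std Dom RSym FSym ar far) (I : Set (RelFact Dom RSym ar)) :
    Set (List Dom × List Dom) :=
  {ab | ∃ ν : σ.Var → Dom, bodyHolds σ ν I ∧
        ab.1 = List.ofFn (fun i : Fin (far σ.f) => ν (Sum.inl i)) ∧
        ab.2 = List.ofFn (fun j => ν (σ.objVars.2 j))}

/-- The object terms of `σ1` and `σ2` are either both variables or both functional
terms over the same function symbol. -/
def objMatch (σ1 σ2 : Std Dom RSym FSym ar far) : Prop :=
  (∃ v1 v2, σ1.obj = Obj.var v1 ∧ σ2.obj = Obj.var v2) ∨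
  (∃ g z1 z2, σ1.obj = Obj.app g z1 ∧ σ2.obj = Obj.app g z2)

/-- `(T, p)` is a pair for which a fresh value `b^{T,p}` is needed:
`δ(T)` has a constraint on `p` with multiplicity in `{1, +}`. -/
def relevantBP {Dom Shape : Type} {D : RDFDom Dom} (S : ShEx Dom Shape D)
    (T : Shape) (p : Dom) : Prop :=
  ∃ tc ∈ S.δ T, tc.prop = p ∧ (tc.mult = Mult.one ∨ tc.mult = Mult.plus)

/-- `J_1 = { T'(b^{T,p}) | p :: T'^μ ∈ δ(T), μ ∈ {1,+} }`. -/
def J1set {Dom Shape : Type} {D : RDFDom Dom} (S : ShEx Dom Shape D)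
    (b : Shape → Dom → Dom) : Set (Fact Dom Shape) :=
  {F | ∃ T : Shape, ∃ tc ∈ S.δ T, (tc.mult = Mult.one ∨ tc.mult = Mult.plus) ∧
       F = factOf tc.target (b T tc.prop)}

/-- `J_2 = { Triple(b^{T,p}, q, b^{T_1,q}) | T_1(b^{T,p}) ∈ J_1, q :: T_2^μ ∈ δ(T_1), μ ∈ {1,+} }`. -/
def J2set {Dom Shape : Type} {D : RDFDom Dom} (S : ShEx Dom Shape D)
    (b : Shape → Dom → Dom) : Set (Fact Dom Shape) :=
  {F | ∃ (T1 : Shape) (n : Dom), Fact.shape T1 n ∈ J1set S b ∧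
       ∃ tc2 ∈ S.δ T1, (tc2.mult = Mult.one ∨ tc2.mult = Mult.plus) ∧
       F = Fact.triple n tc2.prop (b T1 tc2.prop)}

/-- `J_3 = { Triple(a, p, b^{T,p}) | T(a) ∈ J, p :: T'^μ ∈ δ(T), μ ∈ {1,+},
no Triple(a, p, b') in J }`. -/
def J3set {Dom Shape : Type} {D : RDFDom Dom} (S : ShEx Dom Shape D)
    (b : Shape → Dom → Dom) (J : Set (Fact Dom Shape)) : Set (Fact Dom Shape) :=
  {F | ∃ (T : Shape) (n : Dom), Fact.shape T n ∈ J ∧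
       ∃ tc ∈ S.δ T, (tc.mult = Mult.one ∨ tc.mult = Mult.plus) ∧
       (¬ ∃ y : Dom, Fact.triple n tc.prop y ∈ J) ∧
       F = Fact.triple n tc.prop (b T tc.prop)}

/-- The value `d` occurs in the fact `F`. -/
def occursIn {Dom Shape : Type} (d : Dom) : Fact Dom Shape → Prop
  | .triple s p o => d = s ∨ d = p ∨ d = o
  | .lit n => d = n
  | .shape _ n => d = n

variable {Dom RSym FSym Shape : Type} {ar : RSym → ℕ} {far : FSym → ℕ}

/-!
Constraints with multiplicity in `{1, +}` that share a value `b^{T,p}` share their target, so every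
node of `J_1 ∪ J_2` has a single type `T`. Its outgoing triples are then dictated by `T` alone:
exactly one triple, with object `b^{T,p}`, for each property `p` that `T` requires, and none on any
other property. This gives both cardinality sentences, and `tc` holds because `J_1` types `b^{T,p}`
by the target of the constraint on `p`.
-/

/-- The set of values allowed by the sort sentence of `t ∈ 𝒯 ∪ {Lit}`, with `none` standing for
`Lit`. -/
def RDFDom.sortOf (D : RDFDom Dom) : Option Shape → Set Dom
  | none => D.Lit
  | some _ => D.Iri ∪ D.Blank

theorem RDFDom.mem_sortOf_of_mem_nullLit_of_mem_blank {D : RDFDom Dom}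
    {t : Option Shape} {n : Dom}
    (hnone : t = none → n ∈ D.NullLit) (hsome : ∀ T, t = some T → n ∈ D.Blank) :
    n ∈ D.sortOf t := by
  cases t with
  | none => exact D.nullSub (hnone rfl)
  | some T => exact Or.inr (hsome T rfl)

theorem factOf_inj {t t' : Option Shape} {n n' : Dom} :
    factOf t n = factOf t' n' ↔ t = t' ∧ n = n' := by
  cases t <;> cases t' <;> simp [factOf]

theorem factOf_ne_triple (t : Option Shape) (n s p o : Dom) :
    factOf t n ≠ Fact.triple s p o := by
  cases t <;> simp [factOf]

/-- The value `b^{T,p}` determines the target of the constraint on `p`, among the constraints with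
multiplicity in `{1, +}`, so that `J_1` puts each value under one type only. Constraints with a
common target may share a value. -/
def DeterminesTarget {D : RDFDom Dom} (S : ShEx Dom Shape D) (b : Shape → Dom → Dom) : Prop :=
  ∀ T, ∀ tc ∈ S.δ T, ∀ T', ∀ tc' ∈ S.δ T',
    relevantBP S T tc.prop → relevantBP S T' tc'.prop →
      b T tc.prop = b T' tc'.prop → tc.target = tc'.target

section FreshValues

variable {D : RDFDom Dom} {S : ShEx Dom Shape D} {b : Shape → Dom → Dom}

theorem relevantBP_prop_iff {T : Shape} {tc : TC Dom Shape} (htc : tc ∈ S.δ T) :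
    relevantBP S T tc.prop ↔ tc.mult = Mult.one ∨ tc.mult = Mult.plus := by
  refine ⟨?_, fun hmult ↦ ⟨tc, htc, rfl, hmult⟩⟩
  rintro ⟨tc', htc', hprop, hmult⟩
  rwa [S.uniqueProp T tc' htc' tc htc hprop] at hmult

theorem factOf_mem_J1set_union_J2set_iff {t : Option Shape} {n : Dom} :
    factOf t n ∈ J1set S b ∪ J2set S b ↔
      ∃ T, ∃ tc ∈ S.δ T, relevantBP S T tc.prop ∧ tc.target = t ∧ b T tc.prop = n := by
  constructor
  · rintro (⟨T, tc, htc, hmult, hfact⟩ | ⟨_, _, _, _, _, _, hfact⟩)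
    · obtain ⟨rfl, rfl⟩ := factOf_inj.mp hfact
      exact ⟨T, tc, htc, (relevantBP_prop_iff htc).mpr hmult, rfl, rfl⟩
    · exact absurd hfact (factOf_ne_triple _ _ _ _ _)
  · rintro ⟨T, tc, htc, hrel, rfl, rfl⟩
    exact Or.inl ⟨T, tc, htc, (relevantBP_prop_iff htc).mp hrel, rfl⟩

theorem triple_mem_J1set_union_J2set_iff {x p y : Dom} :
    Fact.triple x p y ∈ J1set S b ∪ J2set S b ↔
      ∃ T, Fact.shape T x ∈ J1set S b ∪ J2set S b ∧ relevantBP S T p ∧ y = b T p := by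
  constructor
  · rintro (⟨_, _, _, _, hfact⟩ | ⟨T, _, hx, tc, htc, hmult, hfact⟩)
    · exact absurd hfact.symm (factOf_ne_triple _ _ _ _ _)
    · cases hfact
      exact ⟨T, Or.inl hx, ⟨tc, htc, rfl, hmult⟩, rfl⟩
  · rintro ⟨T, hx | ⟨_, _, _, _, _, _, hfact⟩, ⟨tc, htc, rfl, hmult⟩, rfl⟩
    · exact Or.inr ⟨T, x, hx, tc, htc, hmult, rfl⟩
    · cases hfact

theorem mem_sortOf_of_factOf_mem
    (hsort : ∀ T, ∀ tc ∈ S.δ T, relevantBP S T tc.prop → b T tc.prop ∈ D.sortOf tc.target)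
    {t : Option Shape} {n : Dom} (hn : factOf t n ∈ J1set S b ∪ J2set S b) :
    n ∈ D.sortOf t := by
  obtain ⟨T, tc, htc, hrel, rfl, rfl⟩ := factOf_mem_J1set_union_J2set_iff.mp hn
  exact hsort T tc htc hrel

theorem determinesTarget_of_injective
    (hinj : ∀ T p T' p', relevantBP S T p → relevantBP S T' p' →
      b T p = b T' p' → T = T' ∧ p = p') :
    DeterminesTarget S b := by
  intro T tc htc T' tc' htc' hrel hrel' hb
  obtain ⟨rfl, hprop⟩ := hinj _ _ _ _ hrel hrel' hb
  rw [S.uniqueProp T tc htc tc' htc' hprop]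

theorem DeterminesTarget.eq_of_factOf_mem (hb : DeterminesTarget S b)
    {t t' : Option Shape} {n : Dom}
    (h : factOf t n ∈ J1set S b ∪ J2set S b) (h' : factOf t' n ∈ J1set S b ∪ J2set S b) :
    t = t' := by
  obtain ⟨T, tc, htc, hrel, rfl, hn⟩ := factOf_mem_J1set_union_J2set_iff.mp h
  obtain ⟨T', tc', htc', hrel', rfl, hn'⟩ := factOf_mem_J1set_union_J2set_iff.mp h'
  exact hb T tc htc T' tc' htc' hrel hrel' (hn.trans hn'.symm)

theorem DeterminesTarget.triple_mem_iff_of_shape_mem (hb : DeterminesTarget S b)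
    {T : Shape} {x p y : Dom}
    (hx : Fact.shape T x ∈ J1set S b ∪ J2set S b) :
    Fact.triple x p y ∈ J1set S b ∪ J2set S b ↔ relevantBP S T p ∧ y = b T p := by
  refine ⟨fun hxy ↦ ?_, fun hy ↦ triple_mem_J1set_union_J2set_iff.mpr ⟨T, hx, hy⟩⟩
  obtain ⟨T', hx', hy⟩ := triple_mem_J1set_union_J2set_iff.mp hxy
  have hT : some T = some T' := hb.eq_of_factOf_mem hx hx'
  rwa [Option.some.inj hT]

end FreshValues

theorem stmt6_general {Dom Shape : Type} (D : RDFDom Dom) (S : ShEx Dom Shape D)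
    (b : Shape → Dom → Dom) (hb : DeterminesTarget S b)
    (hsort : ∀ T, ∀ tc ∈ S.δ T, relevantBP S T tc.prop → b T tc.prop ∈ D.sortOf tc.target) :
    satSigma D S (J1set S b ∪ J2set S b) := by
  refine ⟨fun T n hn ↦ mem_sortOf_of_factOf_mem (t := some T) hsort hn,
    fun n hn ↦ mem_sortOf_of_factOf_mem (t := none) hsort hn,
    fun T tc htc ↦ ⟨?target, ?ge_one, ?le_one⟩⟩
  case target =>
    intro x y hx hxy
    obtain ⟨hrel, rfl⟩ := (hb.triple_mem_iff_of_shape_mem hx).mp hxy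
    exact factOf_mem_J1set_union_J2set_iff.mpr ⟨T, tc, htc, hrel, rfl, rfl⟩
  case ge_one =>
    intro hmult x hx
    have hrel := (relevantBP_prop_iff htc).mpr hmult
    exact ⟨b T tc.prop, (hb.triple_mem_iff_of_shape_mem hx).mpr ⟨hrel, rfl⟩⟩
  case le_one =>
    intro _ x y z hx hy hz
    have eq_fresh {w} (hw : Fact.triple x tc.prop w ∈ J1set S b ∪ J2set S b) :
        w = b T tc.prop := ((hb.triple_mem_iff_of_shape_mem hx).mp hw).2
    exact (eq_fresh hy).trans (eq_fresh hz).symm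

theorem stmt6 {Dom Shape : Type} [Countable Dom] [Finite Shape]
    (D : RDFDom Dom) (S : ShEx Dom Shape D) (b : Shape → Dom → Dom)
    (hinj : ∀ T p T' p', relevantBP S T p → relevantBP S T' p' →
      b T p = b T' p' → T = T' ∧ p = p')
    (hsort : ∀ T : Shape, ∀ tc ∈ S.δ T, (tc.mult = Mult.one ∨ tc.mult = Mult.plus) →
      (tc.target = none → b T tc.prop ∈ D.NullLit) ∧
      (∀ T1 : Shape, tc.target = some T1 → b T tc.prop ∈ D.Blank)) :
    satSigma D S (J1set S b ∪ J2set S b) :=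
  stmt6_general D S b (determinesTarget_of_injective hinj) fun T tc htc hrel ↦
    (hsort T tc htc ((relevantBP_prop_iff htc).mp hrel)).elim
      RDFDom.mem_sortOf_of_mem_nullLit_of_mem_blank

end RdfDE
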